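/- For any finite strategic game, any player i ∈ I, and any k ≥ 1, the level-k Choquet rationalizable actions coincide with the level-k representation-based (Epstein-style) rationalizable actions: R_i^k = E_i^k; moreover R_i^∞ = E_i^∞. -/

import Mathlib

/-!
Both procedures generate the same sets because belief in an event is inherited by larger
events (`Believes.mono`): if `E ⊆ E'` and `ν` believes `E`, then for `F ⊆ E'`
`ν (E'ᶜ ∪ F) ≤ ν (Eᶜ ∪ (F ∩ E)) = ν (F ∩ E) ≤ ν F`. Hence the sets `Ek k` decrease in `k`
(`Ek_succ_subset`), so believing the latest product `prodSet i (Ek k)` already entails believing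
all the earlier ones. The cumulative belief restrictions in `CR` therefore amount to the single
restriction used in `Ek`, which is the induction `CR_spec`.
-/

open Classical

noncomputable section

/-- A capacity on a set of states `σ` (all subsets measurable): normalized and monotone. -/
structure Capacity (σ : Type*) where
  toFun : Set σ → ℝ
  empty' : toFun ∅ = 0
  univ' : toFun Set.univ = 1
  mono' : ∀ ⦃E F : Set σ⦄, E ⊆ F → toFun E ≤ toFun F

/-- A set function `ν` believes an event `E` if `ν(Eᶜ ∪ F) = ν F` for every `F ⊆ E`. -/
def Believes {σ : Type*} (ν : Set σ → ℝ) (E : Set σ) : Prop :=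
  ∀ F : Set σ, F ⊆ E → ν (Eᶜ ∪ F) = ν F

/-- The Choquet integral of a finite-range function `g` with respect to the set
function `ν`:  `∑ x ∈ range g, x * (ν {g ≥ x} - ν {g > x})`, which for the distinct
values `x₁ > x₂ > … > xₙ` of `g` equals `∑ᵢ xᵢ (ν(E₁ ∪ ⋯ ∪ Eᵢ) - ν(E₁ ∪ ⋯ ∪ Eᵢ₋₁))`
where `Eᵢ = {s | g s = xᵢ}`. (Defined as `0` in the degenerate infinite-range case.) -/
def choquetInt {σ : Type*} (ν : Set σ → ℝ) (g : σ → ℝ) : ℝ :=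
  if hf : (Set.range g).Finite then
    ∑ x ∈ hf.toFinset, x * (ν {s | x ≤ g s} - ν {s | x < g s})
  else 0

variable {I : Type} [Fintype I] [DecidableEq I]

/-- Profiles of the opponents of player `i`. -/
abbrev Opp (A : I → Type) (i : I) : Type := ∀ j : {j : I // j ≠ i}, A j.val

variable (A : I → Type) [∀ i, Fintype (A i)] [∀ i, Nonempty (A i)]
  (U : ∀ i, (∀ j, A j) → ℝ)

/-- Combine an action of player `i` with a profile of opponents' actions. -/
def extendProf (i : I) (a : A i) (b : Opp A i) : ∀ j, A j :=
  fun j => if h : j = i then cast (congrArg A h.symm) a else b ⟨j, h⟩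

/-- The payoff to `i` from action `a`, as a function of opponents' profiles. -/
def payoff (i : I) (a : A i) : Opp A i → ℝ :=
  fun b => U i (extendProf A i a b)

/-- `a` is a Choquet best response to the capacity (set function) `ν` on `A₋ᵢ`. -/
def IsCBR (i : I) (ν : Set (Opp A i) → ℝ) (a : A i) : Prop :=
  ∀ a' : A i, choquetInt ν (payoff A U i a') ≤ choquetInt ν (payoff A U i a)

/-- The product `∏_{j ≠ i} Q j` viewed as a set of opponents' profiles. -/
def prodSet {τ : I → Type} (i : I) (Q : ∀ j, Set (τ j)) :
    Set (∀ j : {j : I // j ≠ i}, τ j.val) :=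
  {b | ∀ j, b j ∈ Q j.val}

/-- The inductive definition of Choquet rationalizability: `(CR k).1 i` is the
set `C_i^{k+1}` of capacities and `(CR k).2 i` is the set `R_i^{k+1}` of actions
(indices shifted by one: Lean level `k` is paper level `k+1`). -/
def CR : ℕ → (∀ i, Set (Capacity (Opp A i))) × (∀ i, Set (A i))
  | 0 =>
      ⟨fun _ => Set.univ,
       fun i => {a | ∃ ν ∈ (Set.univ : Set (Capacity (Opp A i))), IsCBR A U i ν.toFun a}⟩
  | k + 1 =>
      let p := CR k
      let C : ∀ i, Set (Capacity (Opp A i)) :=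
        fun i => {ν ∈ p.1 i | Believes ν.toFun (prodSet i p.2)}
      ⟨C, fun i => {a | ∃ ν ∈ C i, IsCBR A U i ν.toFun a}⟩

/-- `Rk k i` is the set `R_i^{k+1}` of level-`(k+1)` Choquet rationalizable actions. -/
def Rk (k : ℕ) (i : I) : Set (A i) := (CR A U k).2 i

/-- `Rinf i = R_i^∞`, the Choquet rationalizable actions of player `i`. -/
def Rinf (i : I) : Set (A i) := ⋂ k, Rk A U k i

/-- Epstein's representation-based rationalizability: `Ek 0 i = Aᵢ` and `Ek (k+1) i`
consists of the actions that are Choquet best responses to some capacity on `A₋ᵢ`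
that believes `E₋ᵢᵏ = ∏_{j ≠ i} Ek k j`. -/
def Ek : ℕ → ∀ i, Set (A i)
  | 0 => fun _ => Set.univ
  | k + 1 => fun i =>
      {a | ∃ ν : Capacity (Opp A i),
        Believes ν.toFun (prodSet i (Ek k)) ∧ IsCBR A U i ν.toFun a}

/-- `E_i^∞ = ⋂ₖ E_i^k`, the representation-based rationalizable actions. -/
def Einf (i : I) : Set (A i) := ⋂ k, Ek A U k i
/-- Belief is monotone in the event. -/
theorem Believes.mono {σ : Type*} {ν : Capacity σ} {E E' : Set σ}
    (h : Believes ν.toFun E) (hE : E ⊆ E') : Believes ν.toFun E' := by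
  intro F _
  apply le_antisymm
  · calc ν.toFun (E'ᶜ ∪ F) ≤ ν.toFun (Eᶜ ∪ (F ∩ E)) := by
          apply ν.mono'
          intro x hx
          have := @hE x
          simp only [Set.mem_union, Set.mem_compl_iff, Set.mem_inter_iff] at hx ⊢
          tauto
      _ = ν.toFun (F ∩ E) := h _ Set.inter_subset_right
      _ ≤ ν.toFun F := ν.mono' Set.inter_subset_left
  · exact ν.mono' Set.subset_union_right

theorem prodSet_mono {J : Type} {τ : J → Type} (i : J) {Q Q' : ∀ j, Set (τ j)}
    (h : ∀ j, Q j ⊆ Q' j) : prodSet i Q ⊆ prodSet i Q' :=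
  fun _ hb j => h j.val (hb j)

theorem Ek_succ_subset (k : ℕ) : ∀ i, Ek A U (k + 1) i ⊆ Ek A U k i := by
  induction k with
  | zero => exact fun i => Set.subset_univ _
  | succ k ih =>
    rintro i a ⟨ν, hν, ha⟩
    exact ⟨ν, hν.mono (prodSet_mono i ih), ha⟩

/-- The capacities surviving in `CR k` are exactly those believing `prodSet i (Ek k)`, and
the actions are those of `Ek (k + 1)`. -/
theorem CR_spec (k : ℕ) :
    (∀ i, (CR A U k).1 i = {ν | Believes ν.toFun (prodSet i (Ek A U k))}) ∧
      (CR A U k).2 = Ek A U (k + 1) := by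
  induction k with
  | zero =>
    have h : ∀ i (ν : Capacity (Opp A i)), Believes ν.toFun (prodSet i (Ek A U 0)) := by
      intro i ν F _
      have : prodSet i (Ek A U 0) = Set.univ :=
        Set.eq_univ_of_forall fun _ _ => Set.mem_univ _
      simp [this]
    refine ⟨fun i => (Set.eq_univ_of_forall (h i)).symm, ?_⟩
    funext i
    ext a
    constructor
    · rintro ⟨ν, -, ha⟩
      exact ⟨ν, h i ν, ha⟩
    · rintro ⟨ν, -, ha⟩
      exact ⟨ν, Set.mem_univ _, ha⟩
  | succ k ih =>
    obtain ⟨ih₁, ih₂⟩ := ih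
    have h : ∀ i, (CR A U (k + 1)).1 i =
        {ν | Believes ν.toFun (prodSet i (Ek A U (k + 1)))} := by
      intro i
      change {ν ∈ (CR A U k).1 i | Believes ν.toFun (prodSet i (CR A U k).2)} = _
      rw [ih₁, ih₂]
      ext ν
      exact ⟨fun hν => hν.2,
        fun hν => ⟨Believes.mono hν (prodSet_mono i (Ek_succ_subset A U k)), hν⟩⟩
    refine ⟨h, ?_⟩
    funext i
    change {a | ∃ ν ∈ (CR A U (k + 1)).1 i, IsCBR A U i ν.toFun a} = _
    rw [h]
    rfl

/-- for every `k ≥ 1`, the level-`k` Choquet rationalizable actions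
coincide with the level-`k` representation-based (Epstein-style) rationalizable
actions, `R_i^k = E_i^k` (here `Rk k` is the paper's `R^{k+1}`, matched with
`Ek (k+1)`); moreover `R_i^∞ = E_i^∞`. -/
theorem choquet_rationalizable_eq_representation_based [Nonempty I] (i : I) :
    (∀ k : ℕ, Rk A U k i = Ek A U (k + 1) i) ∧ Rinf A U i = Einf A U i := by
  have h : ∀ k : ℕ, Rk A U k i = Ek A U (k + 1) i :=
    fun k => congrFun (CR_spec A U k).2 i
  refine ⟨h, ?_⟩
  unfold Rinf Einf
  simp only [h]
  -- Dropping the level `Ek 0 = univ` does not change the intersection.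
  apply Set.Subset.antisymm
  · intro a ha
    rw [Set.mem_iInter] at ha ⊢
    intro k
    exact Ek_succ_subset A U k i (ha k)
  · intro a ha
    rw [Set.mem_iInter] at ha ⊢
    exact fun k => ha (k + 1)

end
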